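/- Let n ≥ 2 and let ℓ₁, …, ℓₙ be strictly positive real numbers. Then for every index i with 1 ≤ i ≤ n − 1, the persistence entropy of the full list is bounded above in terms of the entropy of the tail: E(ℓ₁, …, ℓₙ) ≤ log(i + exp(E(ℓ_{i+1}, …, ℓₙ))). -/

import Mathlib

/-- The persistence entropy of a finite list of bar lengths:
`E(L) = -∑ⱼ pⱼ log pⱼ` where `pⱼ = ℓⱼ / S_L` and `S_L = ∑ⱼ ℓⱼ`. -/
noncomputable def persistenceEntropy (L : List ℝ) : ℝ :=
  -(L.map (fun x => x / L.sum * Real.log (x / L.sum))).sum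

/-!
Adding one bar to a barcode increases the exponential of its entropy by at most `1`: by the chain
rule, `E(x, L) = h(p) + (1 - p) E(L)`, where `p` is the share of `x` in the total length and `h` is
the binary entropy, and the maximum of the right-hand side over `p` is `log (1 + exp E(L))`.
Adding the first `i` bars one at a time therefore increases `exp E` by at most `i`.
-/

section

open Real

lemma negMulLog_add_mul_log_le_sub {p q : ℝ} (hp : 0 ≤ p) (hq : 0 < q) :
    negMulLog p + p * log q ≤ q - p := by
  calc negMulLog p + p * log q
      = q * negMulLog (p / q) := by
        rw [div_eq_mul_inv, negMulLog_mul, negMulLog, negMulLog, log_inv]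
        field_simp
    _ ≤ q * (1 - p / q) := by
        gcongr
        exact negMulLog_le_one_sub_self (div_nonneg hp hq.le)
    _ = q - p := by field_simp

-- Compare the weights `p, 1 - p` with `1 / (1 + exp v), exp v / (1 + exp v)`, where equality holds.
lemma binEntropy_add_one_sub_mul_le_log_one_add_exp {p : ℝ} (hp₀ : 0 ≤ p) (hp₁ : p ≤ 1) (v : ℝ) :
    binEntropy p + (1 - p) * v ≤ log (1 + exp v) := by
  have hZ : 0 < 1 + exp v := by positivity
  have hfst := negMulLog_add_mul_log_le_sub hp₀ (inv_pos.2 hZ)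
  have hsnd := negMulLog_add_mul_log_le_sub (sub_nonneg.2 hp₁) (div_pos (exp_pos v) hZ)
  have hmass : (1 + exp v)⁻¹ + exp v / (1 + exp v) = 1 := by field_simp
  rw [log_inv] at hfst
  rw [log_div (exp_pos v).ne' hZ.ne', log_exp] at hsnd
  rw [binEntropy_eq_negMulLog_add_negMulLog_one_sub]
  linarith

lemma persistenceEntropy_eq_sum_negMulLog (L : List ℝ) :
    persistenceEntropy L = (L.map fun x ↦ negMulLog (x / L.sum)).sum := by
  simp [persistenceEntropy, negMulLog, List.sum_neg, Function.comp_def]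

lemma sum_map_negMulLog_mul_div_sum {L : List ℝ} (hL : L.sum ≠ 0) (c : ℝ) :
    (L.map fun x ↦ negMulLog (c * (x / L.sum))).sum = negMulLog c + c * persistenceEntropy L := by
  have hmass : (L.map fun x ↦ x / L.sum).sum = 1 := by
    simp only [div_eq_mul_inv, List.sum_map_mul_right, List.map_id', mul_inv_cancel₀ hL]
  simp only [negMulLog_mul, List.sum_map_add, List.sum_map_mul_right, List.sum_map_mul_left, hmass,
    one_mul, persistenceEntropy_eq_sum_negMulLog]

lemma persistenceEntropy_cons {x : ℝ} {L : List ℝ} (hL : L.sum ≠ 0) (hxL : x + L.sum ≠ 0) :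
    persistenceEntropy (x :: L) =
      binEntropy (x / (x + L.sum)) + (1 - x / (x + L.sum)) * persistenceEntropy L := by
  have hrescale (y : ℝ) : y / (x + L.sum) = (1 - x / (x + L.sum)) * (y / L.sum) := by
    field_simp
    ring
  rw [persistenceEntropy_eq_sum_negMulLog, List.map_cons, List.sum_cons, List.sum_cons,
    List.map_congr_left fun y _ ↦ congrArg negMulLog (hrescale y),
    sum_map_negMulLog_mul_div_sum hL, binEntropy_eq_negMulLog_add_negMulLog_one_sub, add_assoc]

lemma exp_persistenceEntropy_cons_le_one_add_exp {x : ℝ} {L : List ℝ} (hx : 0 ≤ x)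
    (hL : 0 < L.sum) :
    exp (persistenceEntropy (x :: L)) ≤ 1 + exp (persistenceEntropy L) := by
  have hxL : 0 < x + L.sum := add_pos_of_nonneg_of_pos hx hL
  rw [← le_log_iff_exp_le (by positivity), persistenceEntropy_cons hL.ne' hxL.ne']
  exact binEntropy_add_one_sub_mul_le_log_one_add_exp (div_nonneg hx hxL.le)
    (div_le_one_of_le₀ (le_add_of_nonneg_right hL.le) hxL.le) _

lemma exp_persistenceEntropy_append_le_length_add_exp {A B : List ℝ} (hA : ∀ x ∈ A, 0 ≤ x)
    (hB : 0 < B.sum) :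
    exp (persistenceEntropy (A ++ B)) ≤ A.length + exp (persistenceEntropy B) := by
  induction A with
  | nil => simp
  | cons x A ih =>
    obtain ⟨hx, hA⟩ := List.forall_mem_cons.1 hA
    have hAB : 0 < (A ++ B).sum := by
      rw [List.sum_append]
      exact add_pos_of_nonneg_of_pos (List.sum_nonneg hA) hB
    calc exp (persistenceEntropy (x :: (A ++ B)))
        ≤ 1 + exp (persistenceEntropy (A ++ B)) := exp_persistenceEntropy_cons_le_one_add_exp hx hAB
      _ ≤ 1 + (A.length + exp (persistenceEntropy B)) := by gcongr; exact ih hA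
      _ = (x :: A).length + exp (persistenceEntropy B) := by push_cast [List.length_cons]; ring

theorem entropy_le_log_add_exp_tail_general {L : List ℝ} (hL : ∀ x ∈ L, 0 ≤ x) {i : ℕ}
    (htail : 0 < (L.drop i).sum) :
    persistenceEntropy L ≤ log (i + exp (persistenceEntropy (L.drop i))) := by
  rw [le_log_iff_exp_le (by positivity)]
  calc exp (persistenceEntropy L)
      = exp (persistenceEntropy (L.take i ++ L.drop i)) := by rw [List.take_append_drop]
    _ ≤ (L.take i).length + exp (persistenceEntropy (L.drop i)) :=
      exp_persistenceEntropy_append_le_length_add_exp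
        (fun x hx ↦ hL x (List.mem_of_mem_take hx)) htail
    _ ≤ i + exp (persistenceEntropy (L.drop i)) := by gcongr; exact List.length_take_le i L

end

/-- The persistence entropy of the full list is bounded above in terms of the
entropy of the tail: `E(L) ≤ log (i + exp (E(ℓ_{i+1}, …, ℓₙ)))`. -/
theorem entropy_le_log_add_exp_tail (n : ℕ) (hn : 2 ≤ n) (L : List ℝ)
    (hlen : L.length = n) (hpos : ∀ x ∈ L, 0 < x)
    (i : ℕ) (hi1 : 1 ≤ i) (hi2 : i ≤ n - 1) :
    persistenceEntropy L ≤
      Real.log (i + Real.exp (persistenceEntropy (L.drop i))) := by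
  have htail : L.drop i ≠ [] := by rw [Ne, List.drop_eq_nil_iff]; omega
  exact entropy_le_log_add_exp_tail_general (fun x hx ↦ (hpos x hx).le)
    (List.sum_pos _ (fun x hx ↦ hpos x (List.mem_of_mem_drop hx)) htail)
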